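/- Consider n agents partitioned into p nonempty groups, with membership matrix A_H and group Laplacian 𝔾 = A_G A_Gᵀ for a connected group graph. Let (x,y) : [0,∞) → ℝⁿ × ℝᵖ be a differentiable solution of x′ = −x + A_H(A_HᵀA_H)⁻¹ y, y′ = A_Hᵀ x − (I_p + 𝔾) y. Set s = (x₁(0) + ⋯ + xₙ(0) + y₁(0) + ⋯ + y_p(0))/(2p). Then (x(t), y(t)) converges exponentially, as t → ∞, to the equilibrium (x*, y*) given by y*_j = s for j = 1,…,p and x*_i = s/n_{χ(i)} for i = 1,…,n: there exist C ≥ 0 and λ > 0 with ‖(x(t),y(t)) − (x*,y*)‖ ≤ C e^{−λt} for all t ≥ 0. -/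

import Mathlib

open Matrix

/-- `A` is the incidence matrix of a directed graph: each column has exactly one
entry equal to `+1`, exactly one entry equal to `-1`, and all other entries `0`. -/
def IsIncidenceMatrix {V E : Type*} (A : Matrix V E ℝ) : Prop :=
  ∀ j : E, ∃ i k : V, i ≠ k ∧ A i j = 1 ∧ A k j = -1 ∧
    ∀ l : V, l ≠ i → l ≠ k → A l j = 0

/-- The underlying undirected graph (nodes `a, b` adjacent iff some column of `A`
is nonzero in both rows) is connected. -/
def IsConnectedIncidence {V E : Type*} (A : Matrix V E ℝ) : Prop :=
  ∀ i k : V, Relation.ReflTransGen (fun a b => a ≠ b ∧ ∃ j : E, A a j ≠ 0 ∧ A b j ≠ 0) i k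

/-- The 0/1 membership matrix of the partition of the `n` agents into `p` groups
determined by `χ`. -/
def membershipMatrix {n p : ℕ} (χ : Fin n → Fin p) : Matrix (Fin n) (Fin p) ℝ :=
  Matrix.of fun i j => if χ i = j then 1 else 0


lemma coercive_aux {E : Type*} [NormedAddCommGroup E] [NormedSpace ℝ E] [FiniteDimensional ℝ E]
    (V W : E → ℝ) (S : Set E) (hS : IsClosed S) (hSm : ∀ (r : ℝ) z, z ∈ S → r • z ∈ S)
    (hV : Continuous V) (hW : Continuous W)
    (hVh : ∀ (r : ℝ) z, V (r • z) = r ^ 2 * V z) (hWh : ∀ (r : ℝ) z, W (r • z) = r ^ 2 * W z)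
    (hVp : ∀ z, z ≠ 0 → 0 < V z) (hWp : ∀ z ∈ S, z ≠ 0 → 0 < W z) :
    ∃ μ : ℝ, 0 < μ ∧ ∀ z ∈ S, μ * V z ≤ W z := by
  have hV0 : V 0 = 0 := by simpa using hVh 0 0
  have hW0 : W 0 = 0 := by simpa using hWh 0 0
  have : ProperSpace E := FiniteDimensional.proper ℝ E
  have hne : ∀ z ∈ Metric.sphere (0 : E) 1, z ≠ 0 := by
    intro z hz h
    simp [h] at hz
  have hK : IsCompact (Metric.sphere (0 : E) 1 ∩ S) := (isCompact_sphere _ _).inter_right hS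
  rcases (Metric.sphere (0 : E) 1 ∩ S).eq_empty_or_nonempty with he | hn
  · refine ⟨1, one_pos, fun z hz => ?_⟩
    by_cases h0 : z = 0
    · simp [h0, hV0, hW0]
    · exfalso
      have : (‖z‖⁻¹ • z) ∈ Metric.sphere (0 : E) 1 ∩ S := by
        refine ⟨?_, hSm _ _ hz⟩
        simp [norm_smul, h0]
      rw [he] at this
      exact this
  · obtain ⟨w, hw, hmin⟩ := hK.exists_isMinOn hn (f := fun z => W z / V z)
      (hW.continuousOn.div hV.continuousOn fun z hz => (hVp z (hne z hz.1)).ne')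
    refine ⟨W w / V w, div_pos (hWp w hw.2 (hne w hw.1)) (hVp w (hne w hw.1)), fun z hz => ?_⟩
    by_cases h0 : z = 0
    · simp [h0, hV0, hW0]
    · have hm : (‖z‖⁻¹ • z) ∈ Metric.sphere (0 : E) 1 ∩ S := by
        refine ⟨?_, hSm _ _ hz⟩
        simp [norm_smul, h0]
      have h1 : W w / V w ≤ W (‖z‖⁻¹ • z) / V (‖z‖⁻¹ • z) := hmin hm
      have hz' : (‖z‖⁻¹) ^ 2 ≠ 0 := by simpa using h0
      rw [hWh, hVh, mul_div_mul_left _ _ hz'] at h1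
      rwa [le_div_iff₀ (hVp z h0)] at h1

lemma decay_aux (V W : ℝ → ℝ) (μ : ℝ) (hd : ∀ t, 0 ≤ t → HasDerivAt V (-2 * W t) t)
    (h : ∀ t, 0 ≤ t → μ * V t ≤ W t) (t : ℝ) (ht : 0 ≤ t) :
    V t ≤ V 0 * Real.exp (-(2 * μ) * t) := by
  have hd' : ∀ t, 0 ≤ t → HasDerivAt (fun t => V t * Real.exp (2 * μ * t))
      (-2 * W t * Real.exp (2 * μ * t) + V t * (Real.exp (2 * μ * t) * (2 * μ))) t := by
    intro t ht
    have h1 : HasDerivAt (fun t : ℝ => 2 * μ * t) (2 * μ) t := by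
      simpa using (hasDerivAt_id t).const_mul (2 * μ)
    exact (hd t ht).mul h1.exp
  have ha : AntitoneOn (fun t => V t * Real.exp (2 * μ * t)) (Set.Ici 0) := by
    apply antitoneOn_of_deriv_nonpos (convex_Ici 0)
    · intro t ht
      exact (hd' t ht).continuousAt.continuousWithinAt
    · intro t ht
      rw [interior_Ici] at ht
      exact (hd' t (le_of_lt ht)).differentiableAt.differentiableWithinAt
    · intro t ht
      rw [interior_Ici] at ht
      rw [(hd' t (le_of_lt ht)).deriv]
      have := h t (le_of_lt ht)
      have he := Real.exp_pos (2 * μ * t)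
      nlinarith
  have h1 := ha (Set.self_mem_Ici) (Set.mem_Ici.2 ht) ht
  simp only [mul_zero, Real.exp_zero, mul_one] at h1
  have h2 : Real.exp (-(2 * μ) * t) = (Real.exp (2 * μ * t))⁻¹ := by
    rw [← Real.exp_neg]; ring_nf
  rw [h2, ← div_eq_mul_inv, le_div_iff₀ (Real.exp_pos _)]
  exact h1

lemma incidence_col {V E : Type*} [Fintype V] (A : Matrix V E ℝ)
    (hA : IsIncidenceMatrix A) (e : E) :
    ∃ i k : V, (∀ l, A l e ≠ 0 → l = i ∨ l = k) ∧ ∀ f : V → ℝ, (Aᵀ *ᵥ f) e = f i - f k := by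
  classical
  obtain ⟨i, k, hik, hi, hk, h0⟩ := hA e
  refine ⟨i, k, ?_, ?_⟩
  · intro l hl
    by_contra hc
    push Not at hc
    exact hl (h0 l hc.1 hc.2)
  · intro f
    have : ∀ v, A v e * f v = (if v = i then f v else 0) - (if v = k then f v else 0) := by
      intro v
      by_cases h1 : v = i
      · subst h1; simp [hi, hik]
      · by_cases h2 : v = k
        · subst h2; simp [hk, h1]
        · simp [h0 v h1 h2, h1, h2]
    simp [Matrix.mulVec, dotProduct, this, Finset.sum_sub_distrib]

lemma incidence_const {V E : Type*} [Fintype V] (A : Matrix V E ℝ)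
    (hA : IsIncidenceMatrix A) (s : ℝ) : Aᵀ *ᵥ (fun _ => s) = 0 := by
  funext e
  obtain ⟨i, k, -, h⟩ := incidence_col A hA e
  simp [h]

lemma lap_quad {V E : Type*} [Fintype V] [Fintype E] (A : Matrix V E ℝ) (g f : V → ℝ) :
    ∑ j, g j * ((A * Aᵀ) *ᵥ f) j = ∑ e, (Aᵀ *ᵥ g) e * (Aᵀ *ᵥ f) e := by
  change g ⬝ᵥ ((A * Aᵀ) *ᵥ f) = (Aᵀ *ᵥ g) ⬝ᵥ (Aᵀ *ᵥ f)
  rw [← Matrix.mulVec_mulVec, Matrix.dotProduct_mulVec, Matrix.mulVec_transpose,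
    Matrix.mulVec_transpose]

lemma incidence_ker {V E : Type*} [Fintype V] (A : Matrix V E ℝ)
    (hA : IsIncidenceMatrix A) (hc : IsConnectedIncidence A) (f : V → ℝ)
    (hf : Aᵀ *ᵥ f = 0) (a b : V) : f a = f b := by
  induction hc a b with
  | refl => rfl
  | tail _ h ih =>
    obtain ⟨hne, e, h1, h2⟩ := h
    obtain ⟨i, k, h3, h4⟩ := incidence_col A hA e
    have h5 := h4 f
    rw [hf] at h5
    simp only [Pi.zero_apply] at h5
    rw [ih]
    rcases h3 _ h1 with h | h <;> rcases h3 _ h2 with h' | h' <;> rw [h, h'] <;> linarith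

lemma fiber_sum {n p : ℕ} (χ : Fin n → Fin p) (h : Fin n → ℝ) (g : Fin p → ℝ) :
    ∑ i, h i * g (χ i) = ∑ j, (∑ i, if χ i = j then h i else 0) * g j := by
  simp_rw [Finset.sum_mul]
  rw [Finset.sum_comm]
  simp [ite_mul]

lemma fiber_card {n p : ℕ} (χ : Fin n → Fin p) (g : Fin p → ℝ) :
    ∑ i, g (χ i) = ∑ j, ((Finset.univ.filter fun i' => χ i' = j).card : ℝ) * g j := by
  have := fiber_sum χ (fun _ => 1) g
  simpa using this

lemma member_inv {n p : ℕ} (χ : Fin n → Fin p) (hχ : Function.Surjective χ) (y : Fin p → ℝ)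
    (i : Fin n) :
    ((membershipMatrix χ * ((membershipMatrix χ)ᵀ * membershipMatrix χ)⁻¹) *ᵥ y) i =
      y (χ i) / ((Finset.univ.filter fun i' => χ i' = χ i).card : ℝ) := by
  have hpos : ∀ j, ((Finset.univ.filter fun i' => χ i' = j).card : ℝ) ≠ 0 := by
    intro j
    obtain ⟨i, hi⟩ := hχ j
    exact_mod_cast (Finset.card_pos.2 ⟨i, by simp [hi]⟩).ne'
  have h1 : (membershipMatrix χ)ᵀ * membershipMatrix χ =
      Matrix.diagonal fun j => ((Finset.univ.filter fun i' => χ i' = j).card : ℝ) := by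
    ext a b
    simp only [Matrix.mul_apply, Matrix.transpose_apply, membershipMatrix, Matrix.of_apply,
      Matrix.diagonal_apply]
    by_cases h : a = b
    · subst h
      simp only [mul_ite, mul_one, mul_zero, if_true, ← ite_and, and_self]
      simp
    · simp only [h, if_false]
      apply Finset.sum_eq_zero
      intro i _
      by_cases h2 : χ i = a
      · simp [h2, h]
      · simp [h2]
  have h2 : ((membershipMatrix χ)ᵀ * membershipMatrix χ)⁻¹ =
      Matrix.diagonal fun j => ((Finset.univ.filter fun i' => χ i' = j).card : ℝ)⁻¹ := by
    apply Matrix.inv_eq_right_inv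
    rw [h1, Matrix.diagonal_mul_diagonal]
    simp [hpos]
  rw [h2]
  simp [Matrix.mulVec, dotProduct, Matrix.mul_diagonal, membershipMatrix, ite_mul]
  field_simp

lemma member_tr {n p : ℕ} (χ : Fin n → Fin p) (x : Fin n → ℝ) (j : Fin p) :
    ((membershipMatrix χ)ᵀ *ᵥ x) j = ∑ i, if χ i = j then x i else 0 := by
  simp [Matrix.mulVec, dotProduct, membershipMatrix, ite_mul]

lemma coercive_main {n p q : ℕ} (χ : Fin n → Fin p)
    (AG : Matrix (Fin p) (Fin q) ℝ)
    (hAG : IsIncidenceMatrix AG) (hconn : IsConnectedIncidence AG) (c : Fin p → ℝ)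
    (hc : ∀ j, 0 < c j) (hcs : ∀ g : Fin p → ℝ, ∑ i, g (χ i) = ∑ j, c j * g j) :
    ∃ μ : ℝ, 0 < μ ∧ ∀ (e : Fin n → ℝ) (f : Fin p → ℝ), ∑ i, e i + ∑ j, f j = 0 →
      μ * (∑ i, c (χ i) * e i ^ 2 + ∑ j, f j ^ 2) ≤
      ∑ i, c (χ i) * (e i - f (χ i) / c (χ i)) ^ 2 + ∑ k, (AGᵀ *ᵥ f) k ^ 2 := by
  obtain ⟨μ, hμ, h⟩ := coercive_aux (E := (Fin n → ℝ) × (Fin p → ℝ))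
    (fun z => ∑ i, c (χ i) * z.1 i ^ 2 + ∑ j, z.2 j ^ 2)
    (fun z => ∑ i, c (χ i) * (z.1 i - z.2 (χ i) / c (χ i)) ^ 2 + ∑ k, (AGᵀ *ᵥ z.2) k ^ 2)
    {z | ∑ i, z.1 i + ∑ j, z.2 j = 0}
    (isClosed_eq (by fun_prop) (by fun_prop))
    (by
      intro r z hz
      simp only [Set.mem_ofPred_eq, Prod.smul_fst, Prod.smul_snd, Pi.smul_apply, smul_eq_mul,
        ← Finset.mul_sum, ← mul_add] at hz ⊢
      rw [hz, mul_zero])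
    (by fun_prop)
    (by
      simp only [Matrix.mulVec, dotProduct]
      fun_prop)
    (by
      intro r z
      simp only [Prod.smul_fst, Prod.smul_snd, Pi.smul_apply, smul_eq_mul, mul_add,
        Finset.mul_sum]
      congr 1 <;> refine Finset.sum_congr rfl fun _ _ => by ring)
    (by
      intro r z
      simp only [Prod.smul_fst, Prod.smul_snd, Pi.smul_apply, smul_eq_mul, mul_add,
        Finset.mul_sum, Matrix.mulVec_smul]
      congr 1 <;> refine Finset.sum_congr rfl fun _ _ => by ring)
    (by
      intro z hz
      have h1 : ∀ i ∈ Finset.univ, 0 ≤ c (χ i) * z.1 i ^ 2 :=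
        fun i _ => mul_nonneg (hc _).le (sq_nonneg _)
      have h2 : ∀ j ∈ Finset.univ, 0 ≤ z.2 j ^ 2 := fun j _ => sq_nonneg _
      have h3 := Finset.sum_nonneg h1
      have h4 := Finset.sum_nonneg h2
      refine lt_of_le_of_ne (add_nonneg h3 h4) fun h0 => hz ?_
      have h5 := (Finset.sum_eq_zero_iff_of_nonneg h1).1 (by linarith)
      have h6 := (Finset.sum_eq_zero_iff_of_nonneg h2).1 (by linarith)
      ext i
      · have := h5 i (Finset.mem_univ _)
        simpa [(hc _).ne'] using this
      · have := h6 i (Finset.mem_univ _)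
        simpa using this)
    (by
      intro z hS hz
      have h1 : ∀ i ∈ Finset.univ, 0 ≤ c (χ i) * (z.1 i - z.2 (χ i) / c (χ i)) ^ 2 :=
        fun i _ => mul_nonneg (hc _).le (sq_nonneg _)
      have h2 : ∀ j ∈ Finset.univ, 0 ≤ (AGᵀ *ᵥ z.2) j ^ 2 := fun j _ => sq_nonneg _
      have h3 := Finset.sum_nonneg h1
      have h4 := Finset.sum_nonneg h2
      refine lt_of_le_of_ne (add_nonneg h3 h4) fun h0 => hz ?_
      have h5 := (Finset.sum_eq_zero_iff_of_nonneg h1).1 (by linarith)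
      have h6 := (Finset.sum_eq_zero_iff_of_nonneg h2).1 (by linarith)
      have h7 : ∀ i, z.1 i = z.2 (χ i) / c (χ i) := by
        intro i
        have := h5 i (Finset.mem_univ _)
        simp only [mul_eq_zero, (hc _).ne', false_or, pow_eq_zero_iff, ne_eq,
          OfNat.ofNat_ne_zero, not_false_eq_true] at this
        linarith
      have h8 : AGᵀ *ᵥ z.2 = 0 := by
        funext k
        simpa using h6 k (Finset.mem_univ _)
      have h9 := incidence_ker AG hAG hconn z.2 h8
      have h10 : ∑ i, z.1 i = ∑ j, z.2 j := by
        simp_rw [h7]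
        rw [hcs fun j => z.2 j / c j]
        exact Finset.sum_congr rfl fun j _ => by have := (hc j).ne'; field_simp
      have h11 : ∑ j, z.2 j = 0 := by
        have : ∑ i, z.1 i + ∑ j, z.2 j = 0 := hS
        linarith
      have h12 : ∀ j, z.2 j = 0 := by
        intro j
        have hp : (p : ℝ) ≠ 0 := by
          have := j.pos
          positivity
        have h13 : ∑ j', z.2 j' = p * z.2 j := by
          rw [Finset.sum_congr rfl fun j' _ => h9 j' j]
          simp
        rw [h13] at h11
        simpa [hp] using h11
      ext i
      · simp [h7, h12]
      · simp [h12])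
  exact ⟨μ, hμ, fun e f hef => h (e, f) hef⟩

set_option maxHeartbeats 1000000

/-- Any solution on `[0,∞)` of `x' = -x + A_H (A_Hᵀ A_H)⁻¹ y`,
`y' = A_Hᵀ x - (I_p + 𝔾) y` converges exponentially to the equilibrium
`y*_j = s`, `x*_i = s / n_{χ(i)}`, where
`s = (∑ᵢ xᵢ(0) + ∑ⱼ yⱼ(0)) / (2p)`. -/
theorem stmt12 {n p q : ℕ} (χ : Fin n → Fin p) (hχ : Function.Surjective χ)
    (AG : Matrix (Fin p) (Fin q) ℝ)
    (hAG : IsIncidenceMatrix AG) (hconn : IsConnectedIncidence AG)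
    (x : ℝ → Fin n → ℝ) (y : ℝ → Fin p → ℝ)
    (hx : ∀ t : ℝ, 0 ≤ t → HasDerivAt x
      (-(x t) + (membershipMatrix χ * ((membershipMatrix χ)ᵀ * membershipMatrix χ)⁻¹) *ᵥ y t) t)
    (hy : ∀ t : ℝ, 0 ≤ t → HasDerivAt y
      ((membershipMatrix χ)ᵀ *ᵥ x t - (1 + AG * AGᵀ) *ᵥ y t) t) :
    let s : ℝ := ((∑ i, x 0 i) + ∑ j, y 0 j) / (2 * p)
    let xstar : Fin n → ℝ := fun i => s / ((Finset.univ.filter fun i' => χ i' = χ i).card : ℝ)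
    let ystar : Fin p → ℝ := fun _ => s
    ∃ C : ℝ, 0 ≤ C ∧ ∃ lam : ℝ, 0 < lam ∧ ∀ t : ℝ, 0 ≤ t →
      ‖((x t - xstar, y t - ystar) : (Fin n → ℝ) × (Fin p → ℝ))‖ ≤
        C * Real.exp (-lam * t) := by
  intro s xstar ystar
  set c : Fin p → ℝ := fun j => ((Finset.univ.filter fun i' => χ i' = j).card : ℝ) with hcdef
  have hc1 : ∀ j, 1 ≤ c j := by
    intro j
    obtain ⟨i, hi⟩ := hχ j
    have : 1 ≤ (Finset.univ.filter fun i' => χ i' = j).card :=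
      Finset.card_pos.2 ⟨i, by simp [hi]⟩
    simp only [hcdef]
    exact_mod_cast this
  have hc : ∀ j, 0 < c j := fun j => lt_of_lt_of_le one_pos (hc1 j)
  have hcs : ∀ g : Fin p → ℝ, ∑ i, g (χ i) = ∑ j, c j * g j := fiber_card χ
  obtain ⟨μ, hμ, hco⟩ := coercive_main χ AG hAG hconn c hc hcs
  have hxs : ∀ i, xstar i = s / c (χ i) := fun i => rfl
  have hcc : ∀ j, (∑ i, if χ i = j then (1 : ℝ) else 0) = c j := by
    intro j; simp [hcdef]
  -- componentwise equations for the error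
  have he : ∀ t, 0 ≤ t → ∀ i, HasDerivAt (fun t => x t i - xstar i)
      (-(x t i - xstar i) + (y t (χ i) - s) / c (χ i)) t := by
    intro t ht i
    have h1 := (hasDerivAt_pi.1 (hx t ht) i).sub_const (xstar i)
    refine h1.congr_deriv ?_
    rw [Pi.add_apply, member_inv χ hχ, hxs]
    simp only [Pi.neg_apply, hcdef]
    ring
  have hxsum : ∀ j, (∑ i, if χ i = j then xstar i else 0) = s := by
    intro j
    have : ∀ i, (if χ i = j then xstar i else 0) = (if χ i = j then (1 : ℝ) else 0) * (s / c j) := by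
      intro i
      by_cases h : χ i = j
      · subst h; simp [hxs]
      · simp [h]
    rw [Finset.sum_congr rfl fun i _ => this i, ← Finset.sum_mul, hcc]
    have := (hc j).ne'
    field_simp
  have hGs : (AG * AGᵀ) *ᵥ ystar = 0 := by
    rw [← Matrix.mulVec_mulVec, incidence_const AG hAG s, Matrix.mulVec_zero]
  have hf : ∀ t, 0 ≤ t → ∀ j, HasDerivAt (fun t => y t j - s)
      ((∑ i, if χ i = j then (x t i - xstar i) else 0) - (y t j - s)
        - ((AG * AGᵀ) *ᵥ (y t - ystar)) j) t := by
    intro t ht j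
    have h1 := (hasDerivAt_pi.1 (hy t ht) j).sub_const s
    refine h1.congr_deriv ?_
    rw [Pi.sub_apply, member_tr, Matrix.add_mulVec, Matrix.mulVec_sub, hGs, Matrix.one_mulVec]
    have : ∀ i, (if χ i = j then (x t i - xstar i) else 0) =
        (if χ i = j then x t i else 0) - (if χ i = j then xstar i else 0) := by
      intro i; split_ifs <;> simp
    rw [Finset.sum_congr rfl fun i _ => this i, Finset.sum_sub_distrib, hxsum]
    simp only [Pi.add_apply, Pi.sub_apply, Pi.zero_apply]
    ring
  -- conservation
  have hGsum : ∀ g : Fin p → ℝ, ∑ j, ((AG * AGᵀ) *ᵥ g) j = 0 := by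
    intro g
    have := lap_quad AG (fun _ => 1) g
    rw [incidence_const AG hAG 1] at this
    simpa using this
  have hcons : ∀ t, 0 ≤ t → ∑ i, (x t i - xstar i) + ∑ j, (y t j - s) = 0 := by
    have hd : ∀ t, 0 ≤ t → HasDerivAt
        (fun t => ∑ i, (x t i - xstar i) + ∑ j, (y t j - s)) 0 t := by
      intro t ht
      have h1 := (HasDerivAt.fun_sum (u := Finset.univ) fun i _ => he t ht i).add
        (HasDerivAt.fun_sum (u := Finset.univ) fun j _ => hf t ht j)
      refine h1.congr_deriv ?_
      have h2 := fiber_sum χ (fun i => x t i - xstar i) (fun _ => 1)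
      have h3 := hcs fun j => (y t j - s) / c j
      have h4 : ∑ j, c j * ((y t j - s) / c j) = ∑ j, (y t j - s) :=
        Finset.sum_congr rfl fun j _ => by have := (hc j).ne'; field_simp
      simp only [mul_one] at h2
      rw [Finset.sum_add_distrib, Finset.sum_sub_distrib, Finset.sum_sub_distrib, hGsum, ← h2,
        h3, h4, Finset.sum_neg_distrib]
      ring
    intro t ht
    have h0 : ∑ i, (x 0 i - xstar i) + ∑ j, (y 0 j - s) = 0 := by
      have h3 : ∑ i, xstar i = ∑ j : Fin p, s := by
        have := hcs fun j => s / c j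
        rw [← Finset.sum_congr rfl fun i _ => hxs i] at this
        rw [this]
        exact Finset.sum_congr rfl fun j _ => by have := (hc j).ne'; field_simp
      rw [Finset.sum_sub_distrib, Finset.sum_sub_distrib, h3]
      simp only [Finset.sum_const, Finset.card_univ, Fintype.card_fin, nsmul_eq_mul]
      rcases Nat.eq_zero_or_pos p with hp | hp
      · subst hp
        have : IsEmpty (Fin n) := ⟨fun i => (χ i).elim0⟩
        simp
      · have hp' : (p : ℝ) ≠ 0 := by positivity
        simp only [s]
        field_simp
        ring
    have hcst := constant_of_has_deriv_right_zero (a := 0) (b := t)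
      (f := fun t => ∑ i, (x t i - xstar i) + ∑ j, (y t j - s))
      (fun u hu => (hd u hu.1).continuousAt.continuousWithinAt)
      (fun u hu => (hd u hu.1).hasDerivWithinAt) t ⟨ht, le_rfl⟩
    exact hcst.trans h0
  -- Lyapunov function
  have hV := decay_aux
    (fun t => ∑ i, c (χ i) * (x t i - xstar i) ^ 2 + ∑ j, (y t j - s) ^ 2)
    (fun t => ∑ i, c (χ i) * ((x t i - xstar i) - (y t (χ i) - s) / c (χ i)) ^ 2
      + ∑ k, (AGᵀ *ᵥ (y t - ystar)) k ^ 2) μ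
    (by
      intro t ht
      have h1 := (HasDerivAt.fun_sum (u := Finset.univ)
        fun i _ => ((he t ht i).fun_pow 2).const_mul (c (χ i))).add
        (HasDerivAt.fun_sum (u := Finset.univ) fun j _ => (hf t ht j).fun_pow 2)
      refine h1.congr_deriv ?_
      have h2 := fiber_sum χ (fun i => x t i - xstar i) (fun j => y t j - s)
      have h3 := hcs fun j => (y t j - s) ^ 2 / c j
      have h4 : ∑ j, c j * ((y t j - s) ^ 2 / c j) = ∑ j, (y t j - s) ^ 2 :=
        Finset.sum_congr rfl fun j _ => by have := (hc j).ne'; field_simp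
      have h5 := lap_quad AG (y t - ystar) (y t - ystar)
      have e1 : ∀ i, c (χ i) * (((2 : ℕ) : ℝ) * (x t i - xstar i) ^ (2 - 1) *
          (-(x t i - xstar i) + (y t (χ i) - s) / c (χ i))) =
          -2 * (c (χ i) * ((x t i - xstar i) - (y t (χ i) - s) / c (χ i)) ^ 2)
          - 2 * ((x t i - xstar i) * (y t (χ i) - s)) + 2 * ((y t (χ i) - s) ^ 2 / c (χ i)) := by
        intro i
        have := (hc (χ i)).ne'
        simp only [Nat.add_one_sub_one, pow_one]
        field_simp
        push_cast
        ring
      have e2 : ∀ j, ((2 : ℕ) : ℝ) * (y t j - s) ^ (2 - 1) *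
          ((∑ i, if χ i = j then (x t i - xstar i) else 0) - (y t j - s)
            - ((AG * AGᵀ) *ᵥ (y t - ystar)) j) =
          2 * ((∑ i, if χ i = j then (x t i - xstar i) else 0) * (y t j - s))
          - 2 * (y t j - s) ^ 2 - 2 * ((y t - ystar) j * ((AG * AGᵀ) *ᵥ (y t - ystar)) j) := by
        intro j
        have : (y t - ystar) j = y t j - s := rfl
        rw [this]
        simp only [Nat.add_one_sub_one, pow_one]
        push_cast
        ring
      rw [Finset.sum_congr rfl fun i _ => e1 i, Finset.sum_congr rfl fun j _ => e2 j]
      simp only [Finset.sum_add_distrib, Finset.sum_sub_distrib, ← Finset.mul_sum]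
      rw [h5, ← h2, h3, h4]
      simp only [← pow_two]
      ring)
    (by
      intro t ht
      exact hco (fun i => x t i - xstar i) (y t - ystar) (hcons t ht))
  set V : ℝ → ℝ := fun t => ∑ i, c (χ i) * (x t i - xstar i) ^ 2 + ∑ j, (y t j - s) ^ 2 with hVd
  have hn1 : ∀ t, ∀ i ∈ (Finset.univ : Finset (Fin n)), 0 ≤ c (χ i) * (x t i - xstar i) ^ 2 :=
    fun t i _ => mul_nonneg (hc _).le (sq_nonneg _)
  have hn2 : ∀ t, ∀ j ∈ (Finset.univ : Finset (Fin p)), 0 ≤ (y t j - s) ^ 2 :=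
    fun t j _ => sq_nonneg _
  have hV0 : 0 ≤ V 0 := add_nonneg (Finset.sum_nonneg (hn1 0)) (Finset.sum_nonneg (hn2 0))
  refine ⟨√(V 0), Real.sqrt_nonneg _, μ, hμ, fun t ht => ?_⟩
  have hB : 0 ≤ √(V 0) * Real.exp (-μ * t) :=
    mul_nonneg (Real.sqrt_nonneg _) (Real.exp_pos _).le
  have hB2 : V t ≤ (√(V 0) * Real.exp (-μ * t)) ^ 2 := by
    rw [mul_pow, Real.sq_sqrt hV0, ← Real.exp_nat_mul]
    convert hV t ht using 3
    push_cast
    ring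
  rw [Prod.norm_def]
  refine max_le ((pi_norm_le_iff_of_nonneg hB).2 fun i => ?_)
    ((pi_norm_le_iff_of_nonneg hB).2 fun j => ?_)
  · refine abs_le_of_sq_le_sq ?_ hB
    refine le_trans ?_ hB2
    have h1 := Finset.single_le_sum (hn1 t) (Finset.mem_univ i)
    have h2 := Finset.sum_nonneg (hn2 t)
    have h3 : (x t i - xstar i) ^ 2 ≤ c (χ i) * (x t i - xstar i) ^ 2 :=
      le_mul_of_one_le_left (sq_nonneg _) (hc1 _)
    change (x t i - xstar i) ^ 2 ≤ _
    simp only [hVd]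
    linarith
  · refine abs_le_of_sq_le_sq ?_ hB
    refine le_trans ?_ hB2
    have h1 := Finset.single_le_sum (hn2 t) (Finset.mem_univ j)
    have h2 := Finset.sum_nonneg (hn1 t)
    change (y t j - s) ^ 2 ≤ _
    simp only [hVd]
    linarith
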